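/- Let β = (β_1,…,β_t) ∈ Z^t with β_1+⋯+β_t ≥ 0, and let D be a sum of n ≥ 2g + 2(β_1+⋯+β_t) + 2 pairwise distinct rational places avoiding P, Q_1,…,Q_t. Then the divisor E = (n+2g−2−2(β_1+⋯+β_t))P + 2G_β − D is canonical if and only if n + 2g − 1 − 2(β_1+⋯+β_t) ∈ Ĥ*_{2β}, where Ĥ*_{2β} is defined using the divisor 2G_β = 2β_1Q_1+⋯+2β_tQ_t. -/

import Mathlib

/-!
Put `a = n + 2g - 1 - 2∑β` and `A = aP + 2G_β`, so that `deg A = n + 2g - 1` and the divisor of the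
theorem is `E = A - P - D`, of degree `2g - 2`. When the support of `G` avoids that of `D`, evaluation
at `D` is linear on `L(G)` with kernel `L(G - D)` (`Data.finrank_evalMap_range`), so
`dim C_L(D, G) = ℓ(G) - ℓ(G - D)`.

By Riemann-Roch, and since `n ≥ 2`, the divisors `A`, `A - P` and `A - D` have degree at least
`2g - 1`, hence are nonspecial: `dim C_L(D, A) = (n + g) - g = n` and
`dim C_L(D, A - P) = n + g - 1 - ℓ(E)`. Since the second code is contained in the first, they differ
exactly when `ℓ(E) ≠ g - 1`. Finally `ℓ(E) = g - 1 + ℓ(K - E)` with `deg (K - E) = 0`, so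
`ℓ(K - E) ≤ 1` (`Data.ell_le_one`), and `ℓ(E) ≠ g - 1` means `ℓ(E) = g`, i.e. that `E` is canonical.
-/

open scoped BigOperators Classical

noncomputable section

namespace AGCodes

/-- An algebraic function field `F` of one variable over the finite field `Fq`,
presented together with its set of places, discrete valuations, degrees of places,
genus, Riemann-Roch spaces, a canonical divisor, evaluation (residue) maps at
rational places, and the basic axioms these satisfy (including the Riemann-Roch
theorem). Divisors are finitely supported `ℤ`-valued functions on places. -/
structure Data (Fq F Place : Type*) [Field Fq] [Fintype Fq] [Field F] [Algebra Fq F] where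
  /-- the (normalized, additive) discrete valuation at each place; by convention `v P 0 = 0` -/
  v : Place → F → ℤ
  /-- the degree of a place -/
  degP : Place → ℕ
  /-- the genus of the function field -/
  genus : ℕ
  /-- the Riemann-Roch space `L(D)` of a divisor `D` -/
  RR : (Place →₀ ℤ) → Submodule Fq F
  /-- evaluation (residue) of a function at a place; meaningful at rational places
  for functions with no pole there -/
  ev : Place → F → Fq
  /-- a fixed canonical divisor -/
  Kdiv : Place →₀ ℤ
  degP_pos : ∀ P, 0 < degP P
  v_zero : ∀ P, v P 0 = 0
  v_mul : ∀ P (f g : F), f ≠ 0 → g ≠ 0 → v P (f * g) = v P f + v P g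
  v_add : ∀ P (f g : F), f ≠ 0 → g ≠ 0 → f + g ≠ 0 → min (v P f) (v P g) ≤ v P (f + g)
  v_algebraMap : ∀ P (c : Fq), c ≠ 0 → v P (algebraMap Fq F c) = 0
  v_exists_uniformizer : ∀ P : Place, ∃ f : F, f ≠ 0 ∧ v P f = 1
  v_support_finite : ∀ f : F, f ≠ 0 → {P : Place | v P f ≠ 0}.Finite
  /-- `Fq` is the full constant field: functions with no poles are constants -/
  const_of_no_poles : ∀ f : F, f ≠ 0 → (∀ P, 0 ≤ v P f) → ∃ c : Fq, f = algebraMap Fq F c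
  /-- principal divisors have degree zero -/
  deg_principal : ∀ f : F, f ≠ 0 → ∑ᶠ P : Place, v P f * degP P = 0
  mem_RR : ∀ (D : Place →₀ ℤ) (f : F), f ∈ RR D ↔ f = 0 ∨ ∀ P, 0 ≤ v P f + D P
  rr_findim : ∀ D : Place →₀ ℤ, FiniteDimensional Fq (RR D)
  /-- the Riemann-Roch theorem -/
  riemann_roch : ∀ D : Place →₀ ℤ,
    (Module.finrank Fq (RR D) : ℤ)
      = (D.sum fun P k => k * degP P) + 1 - genus
        + Module.finrank Fq (RR (Kdiv - D))
  ev_algebraMap : ∀ (P : Place) (c : Fq), ev P (algebraMap Fq F c) = c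
  ev_add : ∀ (P : Place) (f g : F), degP P = 1 →
    (f = 0 ∨ 0 ≤ v P f) → (g = 0 ∨ 0 ≤ v P g) → ev P (f + g) = ev P f + ev P g
  ev_mul : ∀ (P : Place) (f g : F), degP P = 1 →
    (f = 0 ∨ 0 ≤ v P f) → (g = 0 ∨ 0 ≤ v P g) → ev P (f * g) = ev P f * ev P g
  ev_eq_zero_iff : ∀ (P : Place) (f : F), degP P = 1 → f ≠ 0 → 0 ≤ v P f →
    (ev P f = 0 ↔ 1 ≤ v P f)

variable {Fq F Place : Type*} [Field Fq] [Fintype Fq] [Field F] [Algebra Fq F]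

/-- The divisor `β₁Q₁ + ⋯ + β_tQ_t`. -/
def Gdiv {t : ℕ} (Q : Fin t → Place) (β : Fin t → ℤ) : Place →₀ ℤ :=
  ∑ i, Finsupp.single (Q i) (β i)

/-- The divisor `P₁ + ⋯ + P_n` attached to a tuple of places. -/
def Ddiv {n : ℕ} (PP : Fin n → Place) : Place →₀ ℤ :=
  ∑ j, Finsupp.single (PP j) 1

namespace Data

variable (X : Data Fq F Place)

/-- The degree of a divisor. -/
def divDeg (D : Place →₀ ℤ) : ℤ := D.sum fun P k => k * X.degP P

/-- `ℓ(D)`, the dimension of the Riemann-Roch space of `D`. -/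
def ell (D : Place →₀ ℤ) : ℕ := Module.finrank Fq (X.RR D)

/-- A place is rational if it has degree one. -/
def IsRational (P : Place) : Prop := X.degP P = 1

/-- A divisor is canonical iff it has degree `2g-2` and `ℓ = g`. -/
def IsCanonical (W : Place →₀ ℤ) : Prop :=
  X.divDeg W = 2 * (X.genus : ℤ) - 2 ∧ X.ell W = X.genus

/-- The generalized Weierstrass semigroup `Ĥ(Q₁,…,Q_t)`: vectors
`(-v_{Q₁}(h),…,-v_{Q_t}(h))` for `h ≠ 0` regular outside `{Q₁,…,Q_t}`. -/
def Hhat {t : ℕ} (Q : Fin t → Place) : Set (Fin t → ℤ) :=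
  {α | ∃ h : F, h ≠ 0 ∧ (∀ P : Place, (∀ i, P ≠ Q i) → 0 ≤ X.v P h) ∧
    ∀ i, α i = - X.v (Q i) h}

/-- The classical Weierstrass semigroup `H(P) = {a ∈ ℕ : ∃ z, (z)_∞ = aP}`
(viewed inside `ℤ`). -/
def Hone (P : Place) : Set ℤ :=
  {a | 0 ≤ a ∧ ∃ h : F, h ≠ 0 ∧ (∀ R : Place, R ≠ P → 0 ≤ X.v R h) ∧ X.v P h = -a}

/-- `Ĥ_β = {a ∈ ℤ : ℓ(aP + G_β) ≠ ℓ((a-1)P + G_β)}`. -/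
def HhatB (P : Place) {t : ℕ} (Q : Fin t → Place) (β : Fin t → ℤ) : Set ℤ :=
  {a | X.ell (Finsupp.single P a + Gdiv Q β) ≠ X.ell (Finsupp.single P (a-1) + Gdiv Q β)}

/-- The algebraic geometry (evaluation) code `C_L(D, G)` attached to the tuple of
places `PP` (determining `D = P₁ + ⋯ + P_n`) and the divisor `G`. -/
def code {n : ℕ} (PP : Fin n → Place) (G : Place →₀ ℤ) : Set (Fin n → Fq) :=
  {w | ∃ z ∈ X.RR G, ∀ i, w i = X.ev (PP i) z}

/-- The dimension of the code `C_L(D, G)`. -/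
def codeDim {n : ℕ} (PP : Fin n → Place) (G : Place →₀ ℤ) : ℕ :=
  Module.finrank Fq (Submodule.span Fq (X.code PP G))

/-- `Ĥ*_β = {a ∈ ℤ : C_L(D, aP+G_β) ≠ C_L(D, (a-1)P+G_β)}`. -/
def HhatS {n : ℕ} (PP : Fin n → Place) (P : Place) {t : ℕ} (Q : Fin t → Place)
    (β : Fin t → ℤ) : Set ℤ :=
  {a | X.code PP (Finsupp.single P a + Gdiv Q β)
      ≠ X.code PP (Finsupp.single P (a-1) + Gdiv Q β)}

end Data

/-- The dual code with respect to the standard inner product. -/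
def dualCode {n : ℕ} (C : Set (Fin n → Fq)) : Set (Fin n → Fq) :=
  {y | ∀ c ∈ C, ∑ i, y i * c i = 0}

/-- The isometric code `x · C = {(x₁c₁,…,x_nc_n) : c ∈ C}`. -/
def scaleCode {n : ℕ} (x : Fin n → Fq) (C : Set (Fin n → Fq)) : Set (Fin n → Fq) :=
  (fun c => fun i => x i * c i) '' C

/-- A flag of codes `C₀, C₁, …, C_s` is `x`-isometry-dual if `x` has all coordinates
nonzero and `C_i = x · C_{s-i}^⊥` for all `i`. -/
def IsIsometryDualFlag {n s : ℕ} (C : Fin (s+1) → Set (Fin n → Fq))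
    (x : Fin n → Fq) : Prop :=
  (∀ i, x i ≠ 0) ∧ ∀ i, C i = scaleCode x (dualCode (C (Fin.rev i)))

end AGCodes

open AGCodes

/-! ### Divisors, degrees and Riemann-Roch spaces -/

namespace AGCodes

section Degree

variable {Fq F Place : Type*} [Field Fq] [Fintype Fq] [Field F] [Algebra Fq F]

namespace Data

variable (X : Data Fq F Place)

theorem divDeg_add (A B : Place →₀ ℤ) : X.divDeg (A + B) = X.divDeg A + X.divDeg B := by
  unfold divDeg
  exact Finsupp.sum_add_index' (by simp) (by intros; ring)

theorem divDeg_sub (A B : Place →₀ ℤ) : X.divDeg (A - B) = X.divDeg A - X.divDeg B := by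
  have h := X.divDeg_add (A - B) B
  rw [sub_add_cancel] at h
  omega

theorem divDeg_zero : X.divDeg 0 = 0 := by simp [divDeg]

theorem divDeg_single (P : Place) (k : ℤ) : X.divDeg (Finsupp.single P k) = k * X.degP P := by
  simp [divDeg]

theorem divDeg_sum {ι : Type*} (s : Finset ι) (D : ι → Place →₀ ℤ) :
    X.divDeg (∑ i ∈ s, D i) = ∑ i ∈ s, X.divDeg (D i) := by
  induction s using Finset.induction_on with
  | empty => simp [divDeg_zero]
  | insert a s ha ih => rw [Finset.sum_insert ha, Finset.sum_insert ha, divDeg_add, ih]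

theorem divDeg_Gdiv {t : ℕ} (Q : Fin t → Place) (hQ : ∀ i, X.IsRational (Q i)) (β : Fin t → ℤ) :
    X.divDeg (Gdiv Q β) = ∑ i, β i := by
  unfold Gdiv
  rw [divDeg_sum]
  refine Finset.sum_congr rfl fun i _ => ?_
  rw [divDeg_single, show X.degP (Q i) = 1 from hQ i]
  simp

theorem divDeg_Ddiv {n : ℕ} (PP : Fin n → Place) (hPP : ∀ i, X.IsRational (PP i)) :
    X.divDeg (Ddiv PP) = n := by
  change X.divDeg (Gdiv PP fun _ => 1) = n
  rw [divDeg_Gdiv X PP hPP]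
  simp

/-- The principal divisor of a nonzero function. -/
def princ (f : F) (hf : f ≠ 0) : Place →₀ ℤ :=
  Finsupp.ofSupportFinite (fun P => X.v P f) (X.v_support_finite f hf)

theorem princ_apply (f : F) (hf : f ≠ 0) (P : Place) : X.princ f hf P = X.v P f := rfl

theorem divDeg_princ (f : F) (hf : f ≠ 0) : X.divDeg (X.princ f hf) = 0 := by
  rw [← X.deg_principal f hf]
  unfold divDeg Finsupp.sum
  rw [finsum_eq_sum_of_support_subset]
  · rfl
  · intro P hP
    simp only [Function.mem_support] at hP
    simp only [Finset.mem_coe, Finsupp.mem_support_iff, princ_apply]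
    exact left_ne_zero_of_mul hP

theorem divDeg_nonneg {D : Place →₀ ℤ} (hD : ∀ P, 0 ≤ D P) : 0 ≤ X.divDeg D :=
  Finset.sum_nonneg fun P _ => mul_nonneg (hD P) (by positivity)

theorem eq_zero_of_divDeg_nonpos {D : Place →₀ ℤ} (hD : ∀ P, 0 ≤ D P) (h : X.divDeg D ≤ 0) :
    D = 0 := by
  have h0 : X.divDeg D = 0 := le_antisymm h (X.divDeg_nonneg hD)
  unfold divDeg Finsupp.sum at h0
  rw [Finset.sum_eq_zero_iff_of_nonneg fun P _ => mul_nonneg (hD P) (by positivity)] at h0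
  ext P
  by_contra hP
  have hpos := X.degP_pos P
  rcases mul_eq_zero.1 (h0 P (Finsupp.mem_support_iff.2 hP)) with h1 | h1
  · exact hP h1
  · have : X.degP P = 0 := by exact_mod_cast h1
    omega

theorem divDeg_nonneg_of_mem {D : Place →₀ ℤ} {f : F} (hf : f ≠ 0) (h : f ∈ X.RR D) :
    0 ≤ X.divDeg D := by
  have h1 := ((X.mem_RR D f).1 h).resolve_left hf
  have h2 : 0 ≤ X.divDeg (X.princ f hf + D) := X.divDeg_nonneg h1
  rwa [divDeg_add, divDeg_princ, zero_add] at h2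

/-- In degree at most zero, a nonzero function of `L(D)` has divisor exactly `-D`. -/
theorem v_eq_of_mem {D : Place →₀ ℤ} (hD : X.divDeg D ≤ 0) {f : F} (hf : f ≠ 0)
    (h : f ∈ X.RR D) (P : Place) : X.v P f = - D P := by
  have h1 := ((X.mem_RR D f).1 h).resolve_left hf
  have h2 : X.princ f hf + D = 0 := by
    apply X.eq_zero_of_divDeg_nonpos h1
    rwa [divDeg_add, divDeg_princ, zero_add]
  have h3 := DFunLike.congr_fun h2 P
  simp only [Finsupp.add_apply, princ_apply, Finsupp.zero_apply] at h3
  omega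

theorem ell_eq_zero {D : Place →₀ ℤ} (hD : X.divDeg D < 0) : X.ell D = 0 := by
  have h : X.RR D = ⊥ := by
    rw [Submodule.eq_bot_iff]
    intro f hf
    by_contra h0
    exact absurd (X.divDeg_nonneg_of_mem h0 hf) (by omega)
  unfold ell
  rw [h, finrank_bot]

/-- Two nonzero functions of `L(D)` have the same divisor, so their quotient is constant. -/
theorem ell_le_one {D : Place →₀ ℤ} (hD : X.divDeg D ≤ 0) : X.ell D ≤ 1 := by
  unfold ell
  by_cases hb : ∃ f ∈ X.RR D, f ≠ 0
  · obtain ⟨f, hf, f0⟩ := hb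
    refine finrank_le_one (⟨f, hf⟩ : X.RR D) fun ⟨g, hg⟩ => ?_
    by_cases g0 : g = 0
    · exact ⟨0, by ext; simp [g0]⟩
    have hq : g / f ≠ 0 := div_ne_zero g0 f0
    obtain ⟨c, hc⟩ := X.const_of_no_poles (g / f) hq fun P => by
      have h1 := X.v_mul P (g / f) f hq f0
      rw [div_mul_cancel₀ g f0, X.v_eq_of_mem hD f0 hf, X.v_eq_of_mem hD g0 hg] at h1
      omega
    refine ⟨c, ?_⟩
    ext
    simp only [Submodule.coe_smul, Algebra.smul_def, ← hc, div_mul_cancel₀ g f0]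
  · push Not at hb
    rw [(Submodule.eq_bot_iff _).2 hb, finrank_bot]
    exact zero_le_one

theorem ell_zero : X.ell 0 = 1 := by
  refine le_antisymm (X.ell_le_one (X.divDeg_zero).le) ?_
  have h1 : (1 : F) ∈ X.RR 0 := by
    rw [X.mem_RR]
    right
    intro P
    have := X.v_algebraMap P 1 one_ne_zero
    rw [map_one] at this
    simp [this]
  have := X.rr_findim 0
  have : Nontrivial (X.RR 0) := ⟨⟨1, h1⟩, 0, fun h => one_ne_zero (congrArg Subtype.val h)⟩
  exact Module.finrank_pos

theorem rr (D : Place →₀ ℤ) :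
    (X.ell D : ℤ) = X.divDeg D + 1 - X.genus + X.ell (X.Kdiv - D) := X.riemann_roch D

theorem divDeg_Kdiv : X.divDeg X.Kdiv = 2 * (X.genus : ℤ) - 2 := by
  have h1 := X.rr 0
  have h2 := X.rr X.Kdiv
  rw [divDeg_zero, ell_zero, sub_zero] at h1
  rw [sub_self, ell_zero] at h2
  push_cast at h1 h2
  omega

theorem ell_nonspecial {D : Place →₀ ℤ} (hD : 2 * (X.genus : ℤ) - 1 ≤ X.divDeg D) :
    (X.ell D : ℤ) = X.divDeg D + 1 - X.genus := by
  have h : X.ell (X.Kdiv - D) = 0 := X.ell_eq_zero (by rw [divDeg_sub, divDeg_Kdiv]; omega)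
  rw [X.rr D, h]
  simp

/-! ### Evaluation codes -/

theorem RR_mono {A B : Place →₀ ℤ} (h : A ≤ B) : X.RR A ≤ X.RR B := by
  intro f hf
  rw [X.mem_RR] at hf ⊢
  refine hf.imp_right fun hf P => ?_
  have := hf P
  have := h P
  omega

theorem ev_zero (P : Place) : X.ev P 0 = 0 := by
  simpa using X.ev_algebraMap P 0

theorem regular_of_mem {G : Place →₀ ℤ} {P : Place} (hG : G P = 0) {f : F} (hf : f ∈ X.RR G) :
    f = 0 ∨ 0 ≤ X.v P f :=
  ((X.mem_RR G f).1 hf).imp_right fun h => by simpa [hG] using h P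

/-- The evaluation map `L(G) → F_q^n`, for `G` with support disjoint from that of `D`. -/
def evalMap {n : ℕ} (PP : Fin n → Place) (hPP : ∀ i, X.IsRational (PP i)) (G : Place →₀ ℤ)
    (hG : ∀ i, G (PP i) = 0) : X.RR G →ₗ[Fq] (Fin n → Fq) where
  toFun f i := X.ev (PP i) f
  map_add' f g := by
    funext i
    exact X.ev_add _ _ _ (hPP i) (X.regular_of_mem (hG i) f.2) (X.regular_of_mem (hG i) g.2)
  map_smul' c f := by
    funext i
    have hc : algebraMap Fq F c = 0 ∨ 0 ≤ X.v (PP i) (algebraMap Fq F c) := by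
      by_cases h : c = 0
      · left; simp [h]
      · right; rw [X.v_algebraMap _ _ h]
    simp only [Submodule.coe_smul, Algebra.smul_def, RingHom.id_apply, Pi.smul_apply]
    rw [X.ev_mul _ _ _ (hPP i) hc (X.regular_of_mem (hG i) f.2), X.ev_algebraMap]
    rfl

theorem Ddiv_apply_self {n : ℕ} (PP : Fin n → Place) (hinj : Function.Injective PP) (i : Fin n) :
    Ddiv PP (PP i) = 1 := by
  simp [Ddiv, Finsupp.finsetSum_apply, Finsupp.single_apply, hinj.eq_iff]

theorem Ddiv_apply_of_ne {n : ℕ} (PP : Fin n → Place) {P : Place} (h : ∀ i, PP i ≠ P) :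
    Ddiv PP P = 0 := by
  simp [Ddiv, Finsupp.finsetSum_apply, h]

theorem code_eq_range {n : ℕ} (PP : Fin n → Place) (hPP : ∀ i, X.IsRational (PP i))
    (G : Place →₀ ℤ) (hG : ∀ i, G (PP i) = 0) :
    X.code PP G = (LinearMap.range (X.evalMap PP hPP G hG) : Set (Fin n → Fq)) := by
  ext w
  constructor
  · rintro ⟨z, hz, h⟩
    exact ⟨⟨z, hz⟩, funext fun i => (h i).symm⟩
  · rintro ⟨z, rfl⟩
    exact ⟨z, z.2, fun i => rfl⟩

theorem ker_evalMap {n : ℕ} (PP : Fin n → Place) (hPP : ∀ i, X.IsRational (PP i))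
    (hinj : Function.Injective PP) (G : Place →₀ ℤ) (hG : ∀ i, G (PP i) = 0) :
    (LinearMap.ker (X.evalMap PP hPP G hG)).map (X.RR G).subtype = X.RR (G - Ddiv PP) := by
  ext f
  constructor
  · rintro ⟨⟨f, hf⟩, hk, rfl⟩
    have hk : X.evalMap PP hPP G hG ⟨f, hf⟩ = 0 := hk
    rw [X.mem_RR]
    by_cases f0 : f = 0
    · exact Or.inl f0
    right
    intro R
    have hR := ((X.mem_RR G f).1 hf).resolve_left f0 R
    by_cases h : ∃ i, PP i = R
    · obtain ⟨i, rfl⟩ := h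
      have h1 : X.ev (PP i) f = 0 := congrFun hk i
      rw [hG i, add_zero] at hR
      have h2 := (X.ev_eq_zero_iff _ _ (hPP i) f0 hR).1 h1
      simp only [Finsupp.sub_apply, hG i, Ddiv_apply_self PP hinj, Submodule.subtype_apply]
      omega
    · push Not at h
      simpa [Ddiv_apply_of_ne PP h] using hR
  · intro hf
    by_cases f0 : f = 0
    · subst f0; exact zero_mem _
    have h1 := ((X.mem_RR _ f).1 hf).resolve_left f0
    have hfG : f ∈ X.RR G := by
      refine X.RR_mono (fun R => ?_) hf
      by_cases h : ∃ i, PP i = R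
      · obtain ⟨i, rfl⟩ := h
        simp [Ddiv_apply_self PP hinj]
      · push Not at h
        simp [Ddiv_apply_of_ne PP h]
    refine ⟨⟨f, hfG⟩, ?_, rfl⟩
    change X.evalMap PP hPP G hG ⟨f, hfG⟩ = 0
    funext i
    have h2 := h1 (PP i)
    simp only [Finsupp.sub_apply, hG i, Ddiv_apply_self PP hinj] at h2
    exact (X.ev_eq_zero_iff _ _ (hPP i) f0 (by omega)).2 (by omega)

theorem finrank_evalMap_range {n : ℕ} (PP : Fin n → Place) (hPP : ∀ i, X.IsRational (PP i))
    (hinj : Function.Injective PP) (G : Place →₀ ℤ) (hG : ∀ i, G (PP i) = 0) :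
    Module.finrank Fq (LinearMap.range (X.evalMap PP hPP G hG)) + X.ell (G - Ddiv PP)
      = X.ell G := by
  have := X.rr_findim G
  unfold ell
  rw [← X.ker_evalMap PP hPP hinj G hG, Submodule.finrank_map_subtype_eq]
  exact LinearMap.finrank_range_add_finrank_ker _

/-- Nested codes differ exactly when their dimensions `ℓ(G) - ℓ(G - D)` do. -/
theorem code_ne_iff {n : ℕ} (PP : Fin n → Place) (hPP : ∀ i, X.IsRational (PP i))
    (hinj : Function.Injective PP) {A B : Place →₀ ℤ} (hA : ∀ i, A (PP i) = 0)
    (hB : ∀ i, B (PP i) = 0) (hBA : B ≤ A) :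
    X.code PP A ≠ X.code PP B ↔
      (X.ell A : ℤ) - X.ell (A - Ddiv PP) ≠ X.ell B - X.ell (B - Ddiv PP) := by
  have h1 := X.finrank_evalMap_range PP hPP hinj A hA
  have h2 := X.finrank_evalMap_range PP hPP hinj B hB
  rw [X.code_eq_range PP hPP A hA, X.code_eq_range PP hPP B hB, not_iff_not, SetLike.coe_set_eq]
  constructor
  · intro h
    rw [h] at h1
    omega
  · intro h
    refine (Submodule.eq_of_le_of_finrank_eq ?_ (by omega)).symm
    rintro _ ⟨z, rfl⟩
    exact ⟨⟨z, X.RR_mono hBA z.2⟩, rfl⟩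

end Data

end Degree

end AGCodes

/-! ### The criterion -/

theorem stmt11 {Fq F Place : Type*} [Field Fq] [Fintype Fq] [Field F] [Algebra Fq F]
    (X : Data Fq F Place) (P : Place) {t : ℕ} (Q : Fin t → Place) (β : Fin t → ℤ)
    (hPrat : X.IsRational P) (hQrat : ∀ i, X.IsRational (Q i))
    (hQinj : Function.Injective Q) (hPQ : ∀ i, Q i ≠ P)
    (hβ : 0 ≤ ∑ i, β i)
    {n : ℕ} (PP : Fin n → Place) (hPPrat : ∀ j, X.IsRational (PP j))
    (hPPinj : Function.Injective PP)
    (hPPP : ∀ j, PP j ≠ P) (hPPQ : ∀ j i, PP j ≠ Q i)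
    (hn : 2 * (X.genus : ℤ) + 2 * (∑ i, β i) + 2 ≤ n) :
    X.IsCanonical
        (Finsupp.single P ((n : ℤ) + 2 * X.genus - 2 - 2 * ∑ i, β i)
          + (2 : ℤ) • Gdiv Q β - Ddiv PP)
      ↔ (n : ℤ) + 2 * X.genus - 1 - 2 * (∑ i, β i)
          ∈ X.HhatS PP P Q (fun i => 2 * β i) := by
  have hGd : (2 : ℤ) • Gdiv Q β = Gdiv Q (fun i => 2 * β i) := by
    simp [Gdiv, Finset.smul_sum]
  rw [hGd]
  have hdegG : X.divDeg (Gdiv Q fun i => 2 * β i) = 2 * ∑ i, β i := by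
    rw [X.divDeg_Gdiv Q hQrat, Finset.mul_sum]
  have hdegP (k : ℤ) : X.divDeg (Finsupp.single P k) = k := by
    rw [X.divDeg_single, show X.degP P = 1 from hPrat]
    simp
  have hdegD := X.divDeg_Ddiv PP hPPrat
  have hoff (k : ℤ) (j : Fin n) :
      (Finsupp.single P k + Gdiv Q fun i => 2 * β i) (PP j) = 0 := by
    simp [Gdiv, Finsupp.finsetSum_apply, (hPPP j).symm,
      fun i => (hPPQ j i).symm]
  unfold Data.HhatS
  rw [Set.mem_ofPred_eq, X.code_ne_iff PP hPPrat hPPinj (hoff _) (hoff _)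
    (add_le_add_left (Finsupp.single_le_single.2 (by omega)) _)]
  rw [show (n : ℤ) + 2 * X.genus - 1 - 2 * (∑ i, β i) - 1
    = (n : ℤ) + 2 * X.genus - 2 - 2 * (∑ i, β i) by ring]
  set A := Finsupp.single P ((n : ℤ) + 2 * X.genus - 1 - 2 * (∑ i, β i))
    + Gdiv Q (fun i => 2 * β i) with hA
  set B := Finsupp.single P ((n : ℤ) + 2 * X.genus - 2 - 2 * (∑ i, β i))
    + Gdiv Q (fun i => 2 * β i) with hB
  have dA : X.divDeg A = n + 2 * X.genus - 1 := by
    rw [hA, X.divDeg_add, hdegP, hdegG]; ring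
  have dB : X.divDeg B = n + 2 * X.genus - 2 := by
    rw [hB, X.divDeg_add, hdegP, hdegG]; ring
  have dAD : X.divDeg (A - Ddiv PP) = 2 * X.genus - 1 := by
    rw [X.divDeg_sub, dA, hdegD]; ring
  have dBD : X.divDeg (B - Ddiv PP) = 2 * X.genus - 2 := by
    rw [X.divDeg_sub, dB, hdegD]; ring
  have lA := X.ell_nonspecial (D := A) (by omega)
  have lB := X.ell_nonspecial (D := B) (by omega)
  have lAD := X.ell_nonspecial (D := A - Ddiv PP) (by omega)
  have lBD := X.rr (B - Ddiv PP)
  have lK := X.ell_le_one (D := X.Kdiv - (B - Ddiv PP))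
    (by rw [X.divDeg_sub, X.divDeg_Kdiv, dBD]; omega)
  unfold Data.IsCanonical
  omega
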